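/- arXiv:1806.07616 — 2 statements merged into one kernel-verified Lean document; each statement's English description precedes it below -/
import Mathlib

section
/- Let S be a polynomial ring over a field k with a variable x, and let I_1, J_1, K_1 be monomial ideals of S none of whose minimal monomial generators is divisible by x. Set I = I_1 + (x^m), J = J_1 + (x^n) and K = K_1 + (x^s) with m ≥ n ≥ s ≥ 1. Then the colon ideal ((IJ + IK + JK) : x^s) equals I_1 + J_1 + x^{n−s} K_1 + (x^n). -/
/-!
Since `n ≤ m`, every product occurring in `IJ + IK + JK` lies in
`I₁ + J₁ + (x^s) * (x^(n-s) K₁ + (x^n))`. So if `f x^s` lies in `IJ + IK + JK`, then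
`x^s (f - b) ∈ I₁ + J₁` for some `b ∈ x^(n-s) K₁ + (x^n)`. The ideal `I₁ + J₁` is generated by
monomials free of `x`, so `x` is a nonzerodivisor modulo it (`IsMonomialIdealAvoiding.mem_of_mul`)
and `f - b ∈ I₁ + J₁`. The other inclusion is checked on each summand of the right-hand side.
-/

open MvPolynomial

/-- A monomial ideal of `k[x_1, …, x_r]` none of whose (minimal) monomial generators is
divisible by the variable `x i`, i.e. an ideal generated by monomials in which the variable
`x i` does not occur. -/
def IsMonomialIdealAvoiding {k : Type*} [Field k] {r : ℕ} (i : Fin r)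
    (I : Ideal (MvPolynomial (Fin r) k)) : Prop :=
  ∃ G : Set (Fin r →₀ ℕ), (∀ d ∈ G, d i = 0) ∧
    I = Ideal.span ((fun d => (monomial d (1 : k) : MvPolynomial (Fin r) k)) '' G)

theorem IsMonomialIdealAvoiding.add {k : Type*} [Field k] {r : ℕ} {i : Fin r}
    {A B : Ideal (MvPolynomial (Fin r) k)} (hA : IsMonomialIdealAvoiding i A)
    (hB : IsMonomialIdealAvoiding i B) : IsMonomialIdealAvoiding i (A + B) := by
  obtain ⟨G, hG, rfl⟩ := hA
  obtain ⟨H, hH, rfl⟩ := hB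
  refine ⟨G ∪ H, ?_, ?_⟩
  · rintro d (hd | hd)
    exacts [hG d hd, hH d hd]
  · rw [Set.image_union, Ideal.span_union, Ideal.add_eq_sup]

/-- Powers of `x` are nonzerodivisors modulo an ideal generated by monomials free of `x`: a
generator dividing `x^s u`, for a monomial `u`, already divides `u`. -/
theorem IsMonomialIdealAvoiding.mem_of_mul {k : Type*} [Field k] {r : ℕ} {i : Fin r}
    {A : Ideal (MvPolynomial (Fin r) k)} (hA : IsMonomialIdealAvoiding i A) (s : ℕ)
    {f : MvPolynomial (Fin r) k} (hf : f * X i ^ s ∈ A) : f ∈ A := by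
  obtain ⟨G, hG, rfl⟩ := hA
  rw [mem_ideal_span_monomial_image] at hf ⊢
  intro e he
  obtain ⟨d, hd, hde⟩ := hf (e + Finsupp.single i s) (by
    rw [X_pow_eq_monomial, mem_support_iff, coeff_mul_monomial, mul_one]
    exact mem_support_iff.mp he)
  refine ⟨d, hd, fun j => ?_⟩
  by_cases hj : j = i
  · rw [hj, hG d hd]
    exact Nat.zero_le _
  · simpa [Finsupp.single_apply, Ne.symm hj] using hde j

/-- Each product in the expanded left-hand side lies in `I₁`, `J₁`, `P ^ s * (P ^ p * K₁)` or
`P ^ s * P ^ (s + p)`. -/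
theorem products_le {R : Type*} [CommRing R] (I₁ J₁ K₁ P : Ideal R) (s p q : ℕ) :
    (I₁ + P ^ (s + p + q)) * (J₁ + P ^ (s + p)) + (I₁ + P ^ (s + p + q)) * (K₁ + P ^ s) +
        (J₁ + P ^ (s + p)) * (K₁ + P ^ s) ≤
      (I₁ + J₁) + P ^ s * (P ^ p * K₁ + P ^ (s + p)) := by
  set T := (I₁ + J₁) + P ^ s * (P ^ p * K₁ + P ^ (s + p)) with hT
  have hIT : I₁ ≤ T := le_sup_left.trans le_sup_left
  have hJT : J₁ ≤ T := le_sup_right.trans le_sup_left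
  have hKT : P ^ s * (P ^ p * K₁) ≤ T := (Ideal.mul_mono_right le_sup_left).trans le_sup_right
  have hPT : P ^ s * P ^ (s + p) ≤ T := (Ideal.mul_mono_right le_sup_right).trans le_sup_right
  clear_value T
  have hI (B : Ideal R) : I₁ * B ≤ T := Ideal.mul_le_left.trans hIT
  have hJ (B : Ideal R) : J₁ * B ≤ T := Ideal.mul_le_left.trans hJT
  have hK (B : Ideal R) : P ^ s * (P ^ p * K₁) * B ≤ T := Ideal.mul_le_left.trans hKT
  have hP (B : Ideal R) : P ^ s * P ^ (s + p) * B ≤ T := Ideal.mul_le_left.trans hPT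
  have h1 : P ^ (s + p + q) * J₁ ≤ T := mul_comm J₁ _ ▸ hJ _
  have h2 : P ^ (s + p + q) * P ^ (s + p) ≤ T :=
    le_of_eq_of_le (by ring) (hP (P ^ (p + q)))
  have h3 : P ^ (s + p + q) * K₁ ≤ T := le_of_eq_of_le (by ring) (hK (P ^ q))
  have h4 : P ^ (s + p + q) * P ^ s ≤ T := le_of_eq_of_le (by ring) (hP (P ^ q))
  have h5 : P ^ (s + p) * K₁ ≤ T := le_of_eq_of_le (by ring) hKT
  have h6 : P ^ (s + p) * P ^ s ≤ T := le_of_eq_of_le (by ring) hPT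
  simp only [add_mul, mul_add]
  simp only [Ideal.add_eq_sup, sup_le_iff, hI, hJ, h1, h2, h3, h4, h5, h6, and_self]

theorem mul_le_products {R : Type*} [CommRing R] (I₁ J₁ K₁ P : Ideal R) (s p q : ℕ) :
    (I₁ + J₁ + P ^ p * K₁ + P ^ (s + p)) * P ^ s ≤
      (I₁ + P ^ (s + p + q)) * (J₁ + P ^ (s + p)) + (I₁ + P ^ (s + p + q)) * (K₁ + P ^ s) +
        (J₁ + P ^ (s + p)) * (K₁ + P ^ s) := by
  have hIK (A B : Ideal R) (hA : A ≤ I₁ + P ^ (s + p + q)) (hB : B ≤ K₁ + P ^ s) :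
      A * B ≤ (I₁ + P ^ (s + p + q)) * (J₁ + P ^ (s + p)) +
        (I₁ + P ^ (s + p + q)) * (K₁ + P ^ s) + (J₁ + P ^ (s + p)) * (K₁ + P ^ s) :=
    (Ideal.mul_mono hA hB).trans (le_sup_right.trans le_sup_left)
  have hJK (A B : Ideal R) (hA : A ≤ J₁ + P ^ (s + p)) (hB : B ≤ K₁ + P ^ s) :
      A * B ≤ (I₁ + P ^ (s + p + q)) * (J₁ + P ^ (s + p)) +
        (I₁ + P ^ (s + p + q)) * (K₁ + P ^ s) + (J₁ + P ^ (s + p)) * (K₁ + P ^ s) :=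
    (Ideal.mul_mono hA hB).trans le_sup_right
  have h1 := hIK I₁ (P ^ s) le_sup_left le_sup_right
  have h2 := hJK J₁ (P ^ s) le_sup_left le_sup_right
  have h3 := le_of_eq_of_le (by ring : P ^ p * K₁ * P ^ s = P ^ (s + p) * K₁)
    (hJK (P ^ (s + p)) K₁ le_sup_right le_sup_left)
  have h4 := hJK (P ^ (s + p)) (P ^ s) le_sup_right le_sup_right
  rw [add_mul, add_mul, add_mul]
  exact sup_le (sup_le (sup_le h1 h2) h3) h4

/-- Let `S` be a polynomial ring over a field `k` with a variable `x`, and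
`I₁`, `J₁`, `K₁` monomial ideals of `S` none of whose minimal monomial generators is divisible
by `x`.  Set `I = I₁ + (x^m)`, `J = J₁ + (x^n)` and `K = K₁ + (x^s)` with `m ≥ n ≥ s ≥ 1`.
Then `((IJ + IK + JK) : x^s) = I₁ + J₁ + x^(n-s) K₁ + (x^n)`. -/
theorem colon_sum_products_eq_three {k : Type*} [Field k] {r : ℕ} (i : Fin r)
    (I₁ J₁ K₁ : Ideal (MvPolynomial (Fin r) k))
    (hI₁ : IsMonomialIdealAvoiding i I₁) (hJ₁ : IsMonomialIdealAvoiding i J₁)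
    (hK₁ : IsMonomialIdealAvoiding i K₁) (m n s : ℕ) (hmn : n ≤ m) (hns : s ≤ n) (hs : 1 ≤ s)
    (I J K : Ideal (MvPolynomial (Fin r) k))
    (hI : I = I₁ + Ideal.span {(X i : MvPolynomial (Fin r) k) ^ m})
    (hJ : J = J₁ + Ideal.span {(X i : MvPolynomial (Fin r) k) ^ n})
    (hK : K = K₁ + Ideal.span {(X i : MvPolynomial (Fin r) k) ^ s}) :
    (I * J + I * K + J * K).colon
        (Ideal.span {(X i : MvPolynomial (Fin r) k) ^ s}) =
      I₁ + J₁ + Ideal.span {(X i : MvPolynomial (Fin r) k) ^ (n - s)} * K₁ +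
        Ideal.span {(X i : MvPolynomial (Fin r) k) ^ n} := by
  subst hI hJ hK
  obtain ⟨p, rfl⟩ := Nat.exists_eq_add_of_le hns
  obtain ⟨q, rfl⟩ := Nat.exists_eq_add_of_le hmn
  rw [Nat.add_sub_cancel_left]
  have hle := products_le I₁ J₁ K₁ (Ideal.span {(X i : MvPolynomial (Fin r) k)}) s p q
  have hge := mul_le_products I₁ J₁ K₁ (Ideal.span {(X i : MvPolynomial (Fin r) k)}) s p q
  simp only [Ideal.span_singleton_pow] at hle hge
  apply le_antisymm
  · intro f hf
    have hf' := hle (Submodule.mem_colon.mp hf _ (Ideal.mem_span_singleton_self _))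
    obtain ⟨a, ha, c, hc, hac⟩ := Submodule.mem_sup.mp hf'
    obtain ⟨b, hb, rfl⟩ := Ideal.mem_span_singleton_mul.mp hc
    rw [smul_eq_mul] at hac
    have hfb : f - b ∈ I₁ + J₁ := (hI₁.add hJ₁).mem_of_mul s (by
      have : (f - b) * X i ^ s = a := by linear_combination -hac
      rwa [this])
    rw [add_assoc]
    exact Submodule.mem_sup.mpr ⟨f - b, hfb, b, hb, sub_add_cancel f b⟩
  · intro f hf
    exact Submodule.mem_colon.mpr fun y hy => hge (Ideal.mul_mem_mul hf hy)
end

section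
/- Let S be a polynomial ring over a field k with a variable x, and let I_1, J, K be monomial ideals of S none of whose minimal monomial generators is divisible by x. Set I = I_1 + (x^m) with m ≥ 1. Then the colon ideal ((IJK) : x^m) equals JK. -/
/-!
Since `I * J * K ≤ J * K`, the colon ideal lies in `(J * K : x ^ m)`. The ideal `J * K` is again
generated by monomials free of `x` (`IsMonomialIdealAvoiding.mul`), and `x` is a nonzerodivisor
modulo such an ideal (`IsMonomialIdealAvoiding.mem_of_mul_X_pow_mem`), so `(J * K : x ^ m) = J * K`.
The reverse inclusion holds because `x ^ m ∈ I`.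
-/

open MvPolynomial

lemma IsMonomialIdealAvoiding.mul {k : Type*} [Field k] {r : ℕ} {i : Fin r}
    {J K : Ideal (MvPolynomial (Fin r) k)} (hJ : IsMonomialIdealAvoiding i J)
    (hK : IsMonomialIdealAvoiding i K) : IsMonomialIdealAvoiding i (J * K) := by
  obtain ⟨G, hG, rfl⟩ := hJ
  obtain ⟨H, hH, rfl⟩ := hK
  refine ⟨Set.image2 (· + ·) G H, ?_, ?_⟩
  · rintro _ ⟨a, ha, b, hb, rfl⟩
    simp [hG a ha, hH b hb]
  · rw [Ideal.span_mul_span']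
    congr 1
    ext p
    simp only [Set.mem_mul, Set.mem_image, Set.mem_image2, exists_exists_and_eq_and,
      monomial_mul, mul_one]
    constructor
    · rintro ⟨a, ha, b, hb, rfl⟩
      exact ⟨a + b, ⟨a, ha, b, hb, rfl⟩, rfl⟩
    · rintro ⟨_, ⟨a, ha, b, hb, rfl⟩, rfl⟩
      exact ⟨a, ha, b, hb, rfl⟩

/-- A monomial free of `x i` divides `x i ^ m * u` only if it divides the monomial `u`. -/
lemma IsMonomialIdealAvoiding.mem_of_mul_X_pow_mem {k : Type*} [Field k] {r : ℕ} {i : Fin r}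
    {L : Ideal (MvPolynomial (Fin r) k)} (hL : IsMonomialIdealAvoiding i L) {m : ℕ}
    {f : MvPolynomial (Fin r) k} (hf : f * X i ^ m ∈ L) : f ∈ L := by
  obtain ⟨G, hG, rfl⟩ := hL
  rw [mem_ideal_span_monomial_image] at hf ⊢
  intro u hu
  obtain ⟨d, hd, hle⟩ := hf (u + Finsupp.single i m) (by
    rw [mem_support_iff] at hu ⊢
    rwa [X_pow_eq_monomial, coeff_mul_monomial, mul_one])
  refine ⟨d, hd, fun j => ?_⟩
  by_cases hj : j = i
  · subst hj
    simp [hG d hd]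
  · simpa [Finsupp.single_apply, Ne.symm hj] using hle j

/-- Let `S` be a polynomial ring over a field `k` with a variable `x`, and
`I₁`, `J`, `K` monomial ideals of `S` none of whose minimal monomial generators is divisible
by `x`.  Set `I = I₁ + (x^m)` with `m ≥ 1`.  Then `((IJK) : x^m) = JK`. -/
theorem colon_triple_product_eq {k : Type*} [Field k] {r : ℕ} (i : Fin r)
    (I₁ J K : Ideal (MvPolynomial (Fin r) k))
    (hI₁ : IsMonomialIdealAvoiding i I₁) (hJ : IsMonomialIdealAvoiding i J)
    (hK : IsMonomialIdealAvoiding i K) (m : ℕ) (hm : 1 ≤ m)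
    (I : Ideal (MvPolynomial (Fin r) k))
    (hI : I = I₁ + Ideal.span {(X i : MvPolynomial (Fin r) k) ^ m}) :
    (I * J * K).colon (Ideal.span {(X i : MvPolynomial (Fin r) k) ^ m}) = J * K := by
  have hx : (X i : MvPolynomial (Fin r) k) ^ m ∈ I := by
    rw [hI]
    exact Ideal.mem_sup_right (Ideal.mem_span_singleton_self _)
  ext f
  rw [Submodule.mem_colon]
  constructor
  · intro h
    have h1 := h _ (Ideal.mem_span_singleton_self _)
    rw [smul_eq_mul, mul_assoc I J K] at h1
    have h2 : f * X i ^ m ∈ J * K := (Ideal.mul_le_right : I * (J * K) ≤ J * K) h1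
    exact (hJ.mul hK).mem_of_mul_X_pow_mem h2
  · intro hf p hp
    obtain ⟨q, rfl⟩ := Ideal.mem_span_singleton'.mp hp
    rw [smul_eq_mul, mul_comm f, mul_assoc I J K]
    exact Ideal.mul_mem_mul (Ideal.mul_mem_left _ q hx) hf
end
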